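/- There exists an absolute constant C > 0 such that the following holds: let ξ ∈ (0,1], let G be a d-regular graph on n vertices with d = n^ξ, and suppose G satisfies the δ-small-set α-bipartite density condition for some α ∈ (√d, d] with (α·log d)/(ξ·d) ≤ 1 and some δ ∈ (0,1] with δ ≥ (α/d)/(√5/2 − 1). Then for every probability distribution p on V, ‖Pp‖₂² ≤ C_δ/n + C·√((α·log d)/(ξ·d))·‖p‖₂², where C_δ := δ + (5/4)·(1−δ). -/

import Mathlib

open Finset

/-- The random-walk matrix `P = A/d` of a graph `G` (intended: `d`-regular). -/
noncomputable def walkMatrix {n : ℕ} (G : SimpleGraph (Fin n)) [DecidableRel G.Adj]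
    (d : ℕ) : Matrix (Fin n) (Fin n) ℝ :=
  (d : ℝ)⁻¹ • G.adjMatrix ℝ

/-- `p` is a probability distribution on `Fin n`. -/
def IsProbDist {n : ℕ} (p : Fin n → ℝ) : Prop :=
  (∀ v, 0 ≤ p v) ∧ ∑ v, p v = 1

/-- Total variation distance of `p` from the uniform distribution on `Fin n`. -/
noncomputable def tvFromUniform {n : ℕ} (p : Fin n → ℝ) : ℝ :=
  (1 / 2) * ∑ v, |p v - 1 / (n : ℝ)|

/-- `d_TV(t)`: worst-case total variation distance from uniform after `t` steps
of the random walk. -/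
noncomputable def dTV {n : ℕ} (G : SimpleGraph (Fin n)) [DecidableRel G.Adj]
    (d t : ℕ) : ℝ :=
  sSup {x : ℝ | ∃ p : Fin n → ℝ, IsProbDist p ∧
    x = tvFromUniform ((walkMatrix G d ^ t).mulVec p)}

/-- The `ε`-mixing time `τ_ε(P)`. -/
noncomputable def mixingTime {n : ℕ} (G : SimpleGraph (Fin n)) [DecidableRel G.Adj]
    (d : ℕ) (ε : ℝ) : ℕ :=
  sInf {t : ℕ | dTV G d t ≤ ε}

/-- `|E(S,T)|`: the number of ordered edges `(u,v)` with `u ∈ S`, `v ∈ T`, `uv ∈ E`. -/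
def bipCount {n : ℕ} (G : SimpleGraph (Fin n)) [DecidableRel G.Adj]
    (S T : Finset (Fin n)) : ℕ :=
  ((S ×ˢ T).filter (fun e => G.Adj e.1 e.2)).card

/-- The `α`-bipartite density condition. -/
def BipDensity {n : ℕ} (G : SimpleGraph (Fin n)) [DecidableRel G.Adj]
    (d : ℕ) (α : ℝ) : Prop :=
  ∀ S T : Finset (Fin n),
    (bipCount G S T : ℝ) ≤ d * S.card * T.card / n + α * Real.sqrt (S.card * T.card)

/-- The `δ`-small-set `α`-bipartite density condition. -/
def SmallSetBipDensity {n : ℕ} (G : SimpleGraph (Fin n)) [DecidableRel G.Adj]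
    (d : ℕ) (α δ : ℝ) : Prop :=
  ∀ S T : Finset (Fin n), (S.card : ℝ) ≤ δ * n → (T.card : ℝ) ≤ δ * n →
    (bipCount G S T : ℝ) ≤ d * S.card * T.card / n + α * Real.sqrt (S.card * T.card)

/-- If the sum of `g` over every `m`-element set is at most `B`, then by averaging the sum over
any larger set `S` is at most `(|S| / m) * B`. -/
lemma mul_sum_le_card_mul_of_card_eq {ι : Type*} [DecidableEq ι] {m : ℕ} (hm : 1 ≤ m)
    {g : ι → ℝ} {B : ℝ} (h : ∀ S : Finset ι, S.card = m → ∑ v ∈ S, g v ≤ B) (k : ℕ) :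
    ∀ S : Finset ι, S.card = m + k → m * ∑ v ∈ S, g v ≤ S.card * B := by
  induction k with
  | zero =>
    intro S hS
    have hcard : S.card = m := by simpa using hS
    rw [hcard]
    exact mul_le_mul_of_nonneg_left (h S hcard) (Nat.cast_nonneg m)
  | succ k ih =>
    intro S hS
    have herase : ∀ v ∈ S, m * (∑ u ∈ S, g u - g v) ≤ (m + k : ℝ) * B := by
      intro v hv
      have hc : (S.erase v).card = m + k := by rw [card_erase_of_mem hv, hS]; rfl
      have := ih (S.erase v) hc
      rw [hc, sum_erase_eq_sub hv] at this
      exact_mod_cast this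
    have hsum := sum_le_sum herase
    rw [← mul_sum, sum_sub_distrib, sum_const, sum_const, nsmul_eq_mul, nsmul_eq_mul, hS] at hsum
    have hpos : (0 : ℝ) < m + k := by
      have : (1 : ℝ) ≤ m := by exact_mod_cast hm
      positivity
    rw [hS]
    push_cast at hsum ⊢
    refine le_of_mul_le_mul_left ?_ hpos
    linarith

/-- A nonnegative function on `Fin n`, listed in decreasing order and extended by zero,
with its superlevel sets. -/
lemma exists_decreasing_rearrangement {n : ℕ} (f : Fin n → ℝ) (hf : ∀ v, 0 ≤ f v) :
    ∃ (h : ℕ → ℝ) (S : ℕ → Finset (Fin n)),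
      (∀ i, 0 ≤ h i) ∧ (∀ i, h (i + 1) ≤ h i) ∧ h n = 0 ∧
      (∀ i, i < n → (S i).card = i + 1) ∧
      (∀ v, f v = ∑ i ∈ range n, if v ∈ S i then h i - h (i + 1) else 0) ∧
      ∑ i ∈ range n, h i = ∑ v, f v ∧ ∑ i ∈ range n, h i ^ 2 = ∑ v, f v ^ 2 := by
  set σ : Equiv.Perm (Fin n) := Tuple.sort (fun v => -f v) with hσ
  have hmono : Monotone ((fun v => -f v) ∘ σ) := Tuple.monotone_sort _
  set h : ℕ → ℝ := fun i => if hi : i < n then f (σ ⟨i, hi⟩) else 0 with hh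
  have hval : ∀ i : Fin n, h i = f (σ i) := fun i => by simp [hh]
  refine ⟨h, fun i => univ.filter fun v => (σ.symm v : ℕ) ≤ i, ?_, ?_, by simp [hh], ?_, ?_, ?_, ?_⟩
  · intro i
    simp only [hh]
    split_ifs
    · exact hf _
    · exact le_rfl
  · intro i
    simp only [hh]
    split_ifs with h1 h2
    · have := hmono (show (⟨i, h2⟩ : Fin n) ≤ ⟨i + 1, h1⟩ from Nat.le_succ i)
      simpa using this
    · omega
    · exact hf _
    · exact le_rfl
  · intro i hi
    have : (univ.filter fun v => (σ.symm v : ℕ) ≤ i) =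
        (Iic (⟨i, hi⟩ : Fin n)).map σ.toEmbedding := by
      ext v
      simp only [mem_filter, mem_univ, true_and, mem_map, mem_Iic, Equiv.coe_toEmbedding]
      constructor
      · intro hv
        exact ⟨σ.symm v, hv, by simp⟩
      · rintro ⟨w, hw, rfl⟩
        simpa [Fin.le_def] using hw
    simp only [this, card_map, Fin.card_Iic]
  · intro v
    simp only [mem_filter, mem_univ, true_and]
    rw [← sum_filter]
    have hset : (range n).filter (fun i => (σ.symm v : ℕ) ≤ i) = Ico (σ.symm v : ℕ) n := by
      ext i
      simp only [mem_filter, mem_range, mem_Ico]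
      omega
    rw [hset]
    have htel : ∑ i ∈ Ico (σ.symm v : ℕ) n, (h i - h (i + 1)) = h (σ.symm v : ℕ) - h n := by
      have := sum_Ico_sub h (σ.symm v).isLt.le
      rw [← neg_inj, ← sum_neg_distrib]
      simpa using this
    rw [htel, hval]
    simp [hh]
  · rw [← Fin.sum_univ_eq_sum_range, ← Equiv.sum_comp σ f]
    exact sum_congr rfl fun i _ => hval i
  · rw [← Fin.sum_univ_eq_sum_range (fun i => h i ^ 2), ← Equiv.sum_comp σ (fun v => f v ^ 2)]
    exact sum_congr rfl fun i _ => by rw [hval i]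

/-- Abel summation. -/
lemma sum_range_sub_mul_succ (h φ : ℕ → ℝ) (N : ℕ) :
    ∑ i ∈ range N, (h i - h (i + 1)) * φ (i + 1) =
      ∑ i ∈ range N, h i * (φ (i + 1) - φ i) - h N * φ N + h 0 * φ 0 := by
  induction N with
  | zero => simp
  | succ N ih => rw [sum_range_succ, sum_range_succ, ih]; ring

lemma sum_mul_inv_sqrt_le (h : ℕ → ℝ) (n : ℕ) :
    ∑ i ∈ range n, h i * (√((i : ℝ) + 1))⁻¹ ≤
      √(1 + Real.log n) * √(∑ i ∈ range n, h i ^ 2) := by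
  have hH : ∑ i ∈ range n, ((√((i : ℝ) + 1))⁻¹) ^ 2 ≤ 1 + Real.log n := by
    have h1 := harmonic_le_one_add_log n
    have h2 : ∑ i ∈ range n, ((√((i : ℝ) + 1))⁻¹) ^ 2 = (harmonic n : ℝ) := by
      simp only [harmonic]
      push_cast
      refine sum_congr rfl fun i _ => ?_
      rw [inv_pow, Real.sq_sqrt (by positivity)]
    rw [h2]; exact h1
  have hcs := Real.sum_mul_le_sqrt_mul_sqrt (range n) h (fun i => (√((i : ℝ) + 1))⁻¹)
  rw [mul_comm]
  exact hcs.trans (mul_le_mul_of_nonneg_left (Real.sqrt_le_sqrt hH) (Real.sqrt_nonneg _))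

/-- If the sums of `g` over sets of size at most `m` are controlled, then so are its pairings with
nonnegative functions. -/
lemma sum_mul_le_of_sum_small_set_le {n m : ℕ} (hm : 1 ≤ m) {f g : Fin n → ℝ} (hf : ∀ v, 0 ≤ f v)
    {a b : ℝ} (hb : 0 ≤ b)
    (hg : ∀ S : Finset (Fin n), S.card ≤ m → ∑ v ∈ S, g v ≤ a * S.card + b * √S.card) :
    ∑ v, f v * g v ≤
      a * ∑ v, f v + b * (√(1 + Real.log n) * √(∑ v, f v ^ 2) + (∑ v, f v) / √m) := by
  have hm0 : (0 : ℝ) < m := by exact_mod_cast hm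
  have hsm : 0 < √(m : ℝ) := Real.sqrt_pos.2 hm0
  set φ : ℕ → ℝ := fun k => if k ≤ m then √(k : ℝ) else k / √(m : ℝ) with hφ
  have hall : ∀ S : Finset (Fin n), ∑ v ∈ S, g v ≤ a * S.card + b * φ S.card := by
    intro S
    by_cases hS : S.card ≤ m
    · simpa [hφ, hS] using hg S hS
    · obtain ⟨k, hk⟩ := Nat.exists_eq_add_of_le (le_of_not_ge hS)
      have h1 := mul_sum_le_card_mul_of_card_eq (g := g) (B := a * m + b * √(m : ℝ)) hm
        (fun T hT => by have := hg T hT.le; rwa [hT] at this) k S hk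
      simp only [hφ, hS, if_false]
      refine le_of_mul_le_mul_left (h1.trans (le_of_eq ?_)) hm0
      have hsq := Real.mul_self_sqrt hm0.le
      field_simp
      linear_combination (b * S.card) * hsq
  have hφ_step : ∀ i : ℕ, φ (i + 1) - φ i ≤ (√((i : ℝ) + 1))⁻¹ + (√(m : ℝ))⁻¹ := by
    intro i
    have hi1 : 0 < √((i : ℝ) + 1) := Real.sqrt_pos.2 (by positivity)
    have hsq := Real.mul_self_sqrt (show (0 : ℝ) ≤ i + 1 by positivity)
    have hsqi := Real.mul_self_sqrt (show (0 : ℝ) ≤ i by positivity)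
    have hmq := Real.mul_self_sqrt hm0.le
    by_cases h1 : i + 1 ≤ m
    · have h2 : i ≤ m := by omega
      simp only [hφ, h1, h2, if_true]
      have : √((i : ℝ) + 1) - √(i : ℝ) ≤ (√((i : ℝ) + 1))⁻¹ := by
        rw [← one_div, le_div_iff₀ hi1]
        have : √(i : ℝ) ≤ √((i : ℝ) + 1) := Real.sqrt_le_sqrt (by linarith)
        nlinarith [Real.sqrt_nonneg (i : ℝ)]
      push_cast
      have : 0 < (√(m : ℝ))⁻¹ := by positivity
      linarith
    · have hφi : φ i = i / √(m : ℝ) := by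
        by_cases h2 : i ≤ m
        · have : i = m := by omega
          subst this
          simp only [hφ, le_refl, if_true]
          rw [eq_div_iff hsm.ne', hmq]
        · simp [hφ, h2]
      rw [hφi]
      simp only [hφ, h1, if_false]
      push_cast
      have : 0 < (√((i : ℝ) + 1))⁻¹ := by positivity
      have h3 : ((i : ℝ) + 1) / √(m : ℝ) - i / √(m : ℝ) = (√(m : ℝ))⁻¹ := by ring
      linarith
  obtain ⟨h, S, h0, hanti, hn, hcard, hrep, hsum, hsum2⟩ := exists_decreasing_rearrangement f hf
  have hswap : ∀ g' : Fin n → ℝ, ∑ v, f v * g' v =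
      ∑ i ∈ range n, (h i - h (i + 1)) * ∑ v ∈ S i, g' v := by
    intro g'
    simp_rw [hrep, sum_mul]
    rw [sum_comm]
    refine sum_congr rfl fun i _ => ?_
    simp only [ite_mul, zero_mul]
    rw [← sum_filter, mul_sum]
    simp
  have hones : ∑ v, f v = ∑ i ∈ range n, (h i - h (i + 1)) * ((S i).card : ℝ) := by
    simpa using hswap (fun _ => 1)
  calc ∑ v, f v * g v
      = ∑ i ∈ range n, (h i - h (i + 1)) * ∑ v ∈ S i, g v := hswap g
    _ ≤ ∑ i ∈ range n, (h i - h (i + 1)) * (a * (S i).card + b * φ (S i).card) :=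
        sum_le_sum fun i _ =>
          mul_le_mul_of_nonneg_left (hall (S i)) (sub_nonneg.2 (hanti i))
    _ = a * ∑ v, f v + b * ∑ i ∈ range n, (h i - h (i + 1)) * φ (i + 1) := by
        rw [hones, mul_sum, mul_sum, ← sum_add_distrib]
        refine sum_congr rfl fun i hi => ?_
        rw [hcard i (mem_range.1 hi)]
        ring
    _ = a * ∑ v, f v + b * ∑ i ∈ range n, h i * (φ (i + 1) - φ i) := by
        rw [sum_range_sub_mul_succ, hn]
        simp [hφ]
    _ ≤ _ := by
        gcongr
        calc ∑ i ∈ range n, h i * (φ (i + 1) - φ i)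
            ≤ ∑ i ∈ range n, h i * ((√((i : ℝ) + 1))⁻¹ + (√(m : ℝ))⁻¹) :=
              sum_le_sum fun i _ => mul_le_mul_of_nonneg_left (hφ_step i) (h0 i)
          _ = ∑ i ∈ range n, h i * (√((i : ℝ) + 1))⁻¹ + (∑ v, f v) / √(m : ℝ) := by
              simp_rw [mul_add]
              rw [sum_add_distrib, ← sum_mul, hsum, div_eq_mul_inv]
          _ ≤ _ := by
              rw [← hsum2]
              gcongr
              exact sum_mul_inv_sqrt_le h n

lemma bipCount_eq_sum {n : ℕ} (G : SimpleGraph (Fin n)) [DecidableRel G.Adj]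
    (S T : Finset (Fin n)) :
    (bipCount G S T : ℝ) = ∑ v ∈ T, ∑ u ∈ S, G.adjMatrix ℝ u v := by
  simp_rw [SimpleGraph.adjMatrix_apply]
  rw [sum_comm, bipCount, card_filter, sum_product]
  push_cast
  rfl

/-- The bilinear form of the adjacency matrix under a small-set bipartite density condition. -/
lemma sum_mul_adjMatrix_mulVec_le {n d : ℕ} {G : SimpleGraph (Fin n)} [DecidableRel G.Adj]
    {α δ : ℝ} (hα : 0 ≤ α) (hδ : 0 ≤ δ) (h : SmallSetBipDensity G d α δ)
    (hm : 1 ≤ ⌊δ * n⌋₊) {p q : Fin n → ℝ} (hp : ∀ v, 0 ≤ p v) (hq : ∀ v, 0 ≤ q v) :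
    ∑ u, q u * (G.adjMatrix ℝ).mulVec p u ≤ d / n * (∑ v, p v) * ∑ v, q v +
      α * (√(1 + Real.log n) * √(∑ v, p v ^ 2) + (∑ v, p v) / √⌊δ * n⌋₊) *
        (√(1 + Real.log n) * √(∑ v, q v ^ 2) + (∑ v, q v) / √⌊δ * n⌋₊) := by
  have hδn : 0 ≤ δ * n := by positivity
  have hp1 : 0 ≤ ∑ v, p v := sum_nonneg fun v _ => hp v
  refine sum_mul_le_of_sum_small_set_le hm hq (by positivity) fun S hS => ?_
  have hfloor : ∀ T : Finset (Fin n), T.card ≤ ⌊δ * n⌋₊ → (T.card : ℝ) ≤ δ * n :=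
    fun T hT => (Nat.cast_le.2 hT).trans (Nat.floor_le hδn)
  have hS' := sum_mul_le_of_sum_small_set_le (f := p)
    (g := fun v => ∑ u ∈ S, G.adjMatrix ℝ u v) (a := d * S.card / n) (b := α * √S.card)
    hm hp (by positivity) fun T hT => by
      rw [← bipCount_eq_sum]
      refine (h S T (hfloor S hS) (hfloor T hT)).trans (le_of_eq ?_)
      rw [Real.sqrt_mul (Nat.cast_nonneg _)]
      ring
  have hswap : ∑ u ∈ S, (G.adjMatrix ℝ).mulVec p u =
      ∑ v, p v * ∑ u ∈ S, G.adjMatrix ℝ u v := by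
    simp_rw [Matrix.mulVec, dotProduct, mul_sum]
    rw [sum_comm]
    exact sum_congr rfl fun v _ => sum_congr rfl fun u _ => mul_comm _ _
  rw [hswap]
  refine hS'.trans (le_of_eq ?_)
  ring

section RandomWalk

variable {n d : ℕ} {G : SimpleGraph (Fin n)} [DecidableRel G.Adj]

lemma sum_adjMatrix_mulVec (hG : G.IsRegularOfDegree d) (p : Fin n → ℝ) :
    ∑ v, (G.adjMatrix ℝ).mulVec p v = d * ∑ v, p v := by
  simp_rw [Matrix.mulVec, dotProduct]
  rw [sum_comm, mul_sum]
  refine sum_congr rfl fun v _ => ?_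
  rw [← sum_mul]
  congr 1
  simp_rw [SimpleGraph.adjMatrix_apply, G.adj_comm _ v]
  rw [sum_boole, ← G.neighborFinset_eq_filter, G.card_neighborFinset_eq_degree, hG.degree_eq]

lemma walkMatrix_mulVec (p : Fin n → ℝ) (v : Fin n) :
    (walkMatrix G d).mulVec p v = (d : ℝ)⁻¹ * (G.adjMatrix ℝ).mulVec p v := by
  simp [walkMatrix, Matrix.smul_mulVec]

lemma sum_walkMatrix_mulVec (hG : G.IsRegularOfDegree d) (hd : 0 < d) (p : Fin n → ℝ) :
    ∑ v, (walkMatrix G d).mulVec p v = ∑ v, p v := by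
  have : (d : ℝ) ≠ 0 := by positivity
  simp_rw [walkMatrix_mulVec]
  rw [← mul_sum, sum_adjMatrix_mulVec hG, inv_mul_cancel_left₀ this]

lemma walkMatrix_mulVec_nonneg {p : Fin n → ℝ} (hp : ∀ v, 0 ≤ p v) (v : Fin n) :
    0 ≤ (walkMatrix G d).mulVec p v := by
  rw [walkMatrix_mulVec, SimpleGraph.adjMatrix_mulVec_apply]
  exact mul_nonneg (by positivity) (sum_nonneg fun u _ => hp u)

lemma sum_sq_walkMatrix_mulVec_le (hG : G.IsRegularOfDegree d) (hd : 0 < d) (p : Fin n → ℝ) :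
    ∑ v, (walkMatrix G d).mulVec p v ^ 2 ≤ ∑ v, p v ^ 2 := by
  rw [← sum_walkMatrix_mulVec hG hd (fun v => p v ^ 2)]
  refine sum_le_sum fun v _ => ?_
  simp_rw [walkMatrix_mulVec, SimpleGraph.adjMatrix_mulVec_apply]
  have hd' : (0 : ℝ) < d := by exact_mod_cast hd
  have h := sq_sum_le_card_mul_sum_sq (s := G.neighborFinset v) (f := p)
  rw [G.card_neighborFinset_eq_degree, hG.degree_eq] at h
  calc ((d : ℝ)⁻¹ * ∑ u ∈ G.neighborFinset v, p u) ^ 2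
      = (d : ℝ)⁻¹ ^ 2 * (∑ u ∈ G.neighborFinset v, p u) ^ 2 := by ring
    _ ≤ (d : ℝ)⁻¹ ^ 2 * (d * ∑ u ∈ G.neighborFinset v, p u ^ 2) := by gcongr
    _ = _ := by field_simp

end RandomWalk

/-- The density threshold, after rounding the size bound down to an integer. -/
lemma div_floor_le_of_div_le {n : ℕ} {β δ : ℝ} (hn : 16 ≤ n) (hβ : 1 / √(n : ℝ) ≤ β)
    (hβδ : β / (√5 / 2 - 1) ≤ δ) :
    1 ≤ ⌊δ * n⌋₊ ∧ δ * n / 2 ≤ ⌊δ * n⌋₊ ∧ β / ⌊δ * n⌋₊ ≤ 1 / (8 * n) := by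
  have hn0 : (16 : ℝ) ≤ n := by exact_mod_cast hn
  have h5l : (2.236 : ℝ) ≤ √5 := Real.le_sqrt_of_sq_le (by norm_num)
  have h5u : √5 ≤ (2.2361 : ℝ) := Real.sqrt_le_iff.2 ⟨by norm_num, by norm_num⟩
  rw [div_le_iff₀ (by linarith)] at hβδ
  have hs4 : (4 : ℝ) ≤ √(n : ℝ) := Real.le_sqrt_of_sq_le (by norm_num; linarith)
  have hsq := Real.mul_self_sqrt (show (0 : ℝ) ≤ n by linarith)
  have hβ0 : 0 < β := lt_of_lt_of_le (by positivity) hβ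
  have hδ0 : 0 < δ := by
    by_contra hcon
    nlinarith
  have hβn : 4 ≤ β * n := by
    rw [div_le_iff₀ (by linarith)] at hβ
    calc (4 : ℝ) ≤ √(n : ℝ) := hs4
      _ = 1 * √(n : ℝ) := (one_mul _).symm
      _ ≤ β * √(n : ℝ) * √(n : ℝ) := by gcongr
      _ = β * n := by rw [mul_assoc, hsq]
  have hβδ' : β ≤ δ * 0.11805 := hβδ.trans (by gcongr; linarith)
  have hδn : 33 ≤ δ * n := by nlinarith
  have hfl : δ * n - 1 < ⌊δ * n⌋₊ := Nat.sub_one_lt_floor _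
  refine ⟨?_, by linarith, ?_⟩
  · have : (0 : ℝ) < ⌊δ * n⌋₊ := by linarith
    exact_mod_cast this
  · rw [div_le_div_iff₀ (by linarith) (by linarith)]
    nlinarith

/-- The numerical estimate that absorbs the error terms of the bilinear bound. -/
lemma inv_add_mul_sq_le {N m β δ ℓ L X : ℝ} (hN : 0 < N) (hβ0 : 0 ≤ β) (hℓ : 2 / 3 ≤ ℓ)
    (hL2 : L ^ 2 ≤ 2 * ℓ) (hm0 : 0 < m) (hm2 : δ * N / 2 ≤ m) (hm3 : β / m ≤ 1 / (8 * N))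
    (hδ1 : δ ≤ 1) (hX0 : 1 / N ≤ X) (hε : β * ℓ ≤ 1) :
    1 / N + β * (L * √X + 1 / √m) ^ 2 ≤
      (δ + 5 / 4 * (1 - δ)) / N + 10 * √(β * ℓ) * X := by
  have hX0' : 0 ≤ X := le_trans (by positivity) hX0
  set r := √(β * ℓ) with hr
  have hr0 : 0 ≤ r := Real.sqrt_nonneg _
  have hrsq : r ^ 2 = β * ℓ := Real.sq_sqrt (by positivity)
  have hr1 : r ≤ 1 := Real.sqrt_le_one.2 hε
  set y := √β * L * √X with hy
  set z := √(β / m) with hz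
  have hexp : β * (L * √X + 1 / √m) ^ 2 = (y + z) ^ 2 := by
    rw [hy, hz, Real.sqrt_div hβ0]
    have := Real.sq_sqrt hβ0
    calc β * (L * √X + 1 / √m) ^ 2 = √β ^ 2 * (L * √X + 1 / √m) ^ 2 := by rw [this]
      _ = _ := by ring
  have hz2 : z ^ 2 = β / m := Real.sq_sqrt (by positivity)
  have hy2 : y ^ 2 ≤ 2 * r ^ 2 * X := by
    rw [hy, mul_pow, mul_pow, Real.sq_sqrt hβ0, Real.sq_sqrt hX0', hrsq]
    calc β * L ^ 2 * X ≤ β * (2 * ℓ) * X := by gcongr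
      _ = _ := by ring
  have hz8 : z ^ 2 ≤ X / 8 := by
    rw [hz2]
    refine hm3.trans ?_
    rw [show 1 / (8 * N) = 1 / N / 8 by ring]
    linarith
  have hcross : 2 * (y * z) ≤ r * X := by
    refine abs_le_of_sq_le_sq' ?_ (by positivity) |>.2
    calc (2 * (y * z)) ^ 2 = 4 * (y ^ 2 * z ^ 2) := by ring
      _ ≤ 4 * (2 * r ^ 2 * X * (X / 8)) := by gcongr
      _ = (r * X) ^ 2 := by ring
  have hrr : r ^ 2 * X ≤ r * X :=
    mul_le_mul_of_nonneg_right (pow_le_of_le_one hr0 hr1 two_ne_zero) hX0'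
  have hrX : 0 ≤ r * X := by positivity
  rw [hexp, show (y + z) ^ 2 = y ^ 2 + 2 * (y * z) + z ^ 2 by ring]
  rcases le_total δ (1 / 2) with hδ2 | hδ2
  · have h9 : 1 / N + z ^ 2 ≤ (δ + 5 / 4 * (1 - δ)) / N := by
      rw [hz2]
      have h1 : 1 / N + 1 / (8 * N) = (9 / 8) / N := by field_simp; norm_num
      have h2 : (9 / 8) / N ≤ (δ + 5 / 4 * (1 - δ)) / N := by gcongr; linarith
      linarith
    linarith
  · have h1 : 1 / N ≤ (δ + 5 / 4 * (1 - δ)) / N := by gcongr; linarith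
    have hzr : z ^ 2 ≤ 6 * (r * X) := by
      have hmn : N / 4 ≤ m := by nlinarith
      have hb : β ≤ 3 / 2 * r ^ 2 := by rw [hrsq]; nlinarith
      calc z ^ 2 = β / m := hz2
        _ ≤ β / (N / 4) := by gcongr
        _ = 4 * β * (1 / N) := by ring
        _ ≤ 4 * (3 / 2 * r ^ 2) * X := by gcongr
        _ = 6 * (r ^ 2 * X) := by ring
        _ ≤ 6 * (r * X) := by linarith
    linarith

/-- one-step 2-norm decrease from small-set bipartite density. -/
theorem two_norm_decrease_of_small_set_bipartite_density :
    ∃ C : ℝ, 0 < C ∧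
      ∀ (ξ : ℝ) (n d : ℕ) (G : SimpleGraph (Fin n)) [DecidableRel G.Adj] (α δ : ℝ),
        0 < ξ → ξ ≤ 1 →
        G.IsRegularOfDegree d →
        (d : ℝ) = (n : ℝ) ^ ξ →
        Real.sqrt d < α → α ≤ d →
        α * Real.log d / (ξ * d) ≤ 1 →
        0 < δ → δ ≤ 1 → (α / d) / (Real.sqrt 5 / 2 - 1) ≤ δ →
        SmallSetBipDensity G d α δ →
        ∀ p : Fin n → ℝ, IsProbDist p →
          ∑ v, ((walkMatrix G d).mulVec p v) ^ 2 ≤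
            (δ + (5 / 4) * (1 - δ)) / n +
              C * Real.sqrt (α * Real.log d / (ξ * d)) * ∑ v, (p v) ^ 2 := by
  refine ⟨10, by norm_num, ?_⟩
  intro ξ n d G _ α δ hξ _ hG hd hα _ hε hδ hδ1 hαδ hdens p hp
  obtain ⟨hp0, hp1⟩ := hp
  have hn0 : 0 < n := by
    rcases Nat.eq_zero_or_pos n with rfl | h
    · simp at hp1
    · exact h
  have hn0' : (0 : ℝ) < n := by exact_mod_cast hn0
  have hd0' : (0 : ℝ) < d := by rw [hd]; positivity
  have hd0 : 0 < d := by exact_mod_cast hd0'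
  have hdn : d < n := by
    have := G.degree_lt_card_verts ⟨0, hn0⟩
    rwa [hG.degree_eq, Fintype.card_fin] at this
  have hdn' : (d : ℝ) ≤ n := by exact_mod_cast hdn.le
  have hn2 : (2 : ℝ) ≤ n := by exact_mod_cast (show 2 ≤ n by omega)
  have hlogd : Real.log d = ξ * Real.log n := by rw [hd, Real.log_rpow hn0']
  have hrate : α * Real.log d / (ξ * d) = α / d * Real.log n := by
    rw [hlogd]; field_simp
  rw [hrate] at hε ⊢
  have hα0 : 0 < α := (Real.sqrt_nonneg _).trans_lt hα
  have hβ : 1 / √(n : ℝ) ≤ α / d := by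
    have hsd : 0 < √(d : ℝ) := Real.sqrt_pos.2 hd0'
    calc 1 / √(n : ℝ) ≤ 1 / √(d : ℝ) := by gcongr
      _ = √(d : ℝ) / d := by
        rw [div_eq_div_iff hsd.ne' hd0'.ne', one_mul, Real.mul_self_sqrt hd0'.le]
      _ ≤ α / d := by gcongr
  set β := α / (d : ℝ) with hβdef
  have hβ0 : 0 < β := by positivity
  set q := (walkMatrix G d).mulVec p with hq
  set X := ∑ v, p v ^ 2 with hX
  have hQX : ∑ v, q v ^ 2 ≤ X := sum_sq_walkMatrix_mulVec_le hG hd0 p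
  have hX0 : 1 / (n : ℝ) ≤ X := by
    have := sq_sum_le_card_mul_sum_sq (s := (univ : Finset (Fin n))) (f := p)
    rw [hp1, card_univ, Fintype.card_fin] at this
    rw [div_le_iff₀ hn0']
    linarith
  have hX0' : 0 ≤ X := le_trans (by positivity) hX0
  have hlog2 : 0.6931 < Real.log n :=
    lt_of_lt_of_le (by linarith [Real.log_two_gt_d9]) (Real.log_le_log (by norm_num) hn2)
  set r := √(β * Real.log n) with hr
  have hr0 : 0 ≤ r := Real.sqrt_nonneg _
  have hrsq : r ^ 2 = β * Real.log n := Real.sq_sqrt (by positivity)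
  by_cases hn : n < 16
  · have hs4 : √(n : ℝ) ≤ 4 :=
      Real.sqrt_le_iff.2 ⟨by norm_num, by norm_num; exact_mod_cast hn.le⟩
    have hβ4 : 1 / 4 ≤ β := le_trans (by gcongr) hβ
    have hr10 : 1 ≤ 10 * r := by nlinarith
    have hpos : 0 ≤ (δ + 5 / 4 * (1 - δ)) / (n : ℝ) := div_nonneg (by linarith) hn0'.le
    nlinarith
  · obtain ⟨hm1, hm2, hm3⟩ := div_floor_le_of_div_le (by omega) hβ hαδ
    have hform := sum_mul_adjMatrix_mulVec_le hα0.le hδ.le hdens hm1 hp0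
      (walkMatrix_mulVec_nonneg (G := G) (d := d) hp0)
    rw [← hq, sum_walkMatrix_mulVec hG hd0, hp1] at hform
    set m : ℝ := (⌊δ * n⌋₊ : ℝ) with hm
    have hm0 : 0 < m := by rw [hm]; exact_mod_cast hm1
    set L := √(1 + Real.log n) with hL
    have hL2 : L ^ 2 ≤ 2 * Real.log n := by
      rw [hL, Real.sq_sqrt (by linarith)]
      have : Real.log 4 ≤ Real.log n :=
        Real.log_le_log (by norm_num) (by exact_mod_cast (show 4 ≤ n by omega))
      have h4 : Real.log 4 = 2 * Real.log 2 := by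
        rw [show (4 : ℝ) = 2 ^ 2 by norm_num, Real.log_pow]; norm_num
      linarith [Real.log_two_gt_d9]
    have hbound : ∑ v, q v ^ 2 ≤ 1 / n + β * (L * √X + 1 / √m) ^ 2 := by
      have hqA : ∑ v, q v ^ 2 = (d : ℝ)⁻¹ * ∑ u, q u * (G.adjMatrix ℝ).mulVec p u := by
        rw [mul_sum]
        refine sum_congr rfl fun v _ => ?_
        have : q v = (d : ℝ)⁻¹ * (G.adjMatrix ℝ).mulVec p v := walkMatrix_mulVec p v
        rw [sq]
        nth_rewrite 2 [this]
        ring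
      rw [hqA]
      calc (d : ℝ)⁻¹ * ∑ u, q u * (G.adjMatrix ℝ).mulVec p u
          ≤ (d : ℝ)⁻¹ * (d / n * 1 * 1 + α * (L * √X + 1 / √m) * (L * √X + 1 / √m)) := by
            refine mul_le_mul_of_nonneg_left (hform.trans ?_) (by positivity)
            gcongr
        _ = _ := by rw [hβdef]; field_simp
    exact hbound.trans
      (inv_add_mul_sq_le hn0' hβ0.le (by linarith) hL2 hm0 hm2 hm3 hδ1 hX0 hε)
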